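/- For all positive integers Δ and n with Δ ≡ 0 (mod 4) and n ≡ 0 (mod 5(Δ/2 − 1)), there is a chordal, K_{3,3}-minor-free graph G with |V(G)| = n, maximum degree Δ, and crossing number cr(G) = (Δn/40)·(1 + 2/(Δ−2)) > Δn/40. -/

import Mathlib

open Finset

/-- A drawing of a graph `G` in the plane: vertices are represented by distinct points,
and each edge by a simple continuous arc between (the points of) its endpoints, meeting
vertex points only at its own endpoints. -/
structure Drawing {V : Type*} (G : SimpleGraph V) where
  pos : V → ℝ × ℝ
  pos_inj : Function.Injective pos
  arc : G.edgeSet → Set.Icc (0 : ℝ) 1 → ℝ × ℝ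
  arc_cont : ∀ e, Continuous (arc e)
  arc_inj : ∀ e, Function.Injective (arc e)
  arc_ends : ∀ (e : G.edgeSet) (v w : V), (e : Sym2 V) = s(v, w) →
    (arc e ⟨0, by norm_num⟩ = pos v ∧ arc e ⟨1, by norm_num⟩ = pos w) ∨
    (arc e ⟨0, by norm_num⟩ = pos w ∧ arc e ⟨1, by norm_num⟩ = pos v)
  arc_avoid : ∀ (e : G.edgeSet) (x : V) (t : Set.Icc (0 : ℝ) 1),
    arc e t = pos x → x ∈ (e : Sym2 V)

/-- The crossings of a drawing, recorded as ordered triples `(p, e, f)` where `p` is a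
point lying on the arcs of the two distinct edges `e ≠ f` and `p` is not the image of a
common endpoint of `e` and `f`.  Each crossing is thereby counted twice. -/
def crossingTriples {V : Type*} {G : SimpleGraph V} (D : Drawing G) :
    Set ((ℝ × ℝ) × G.edgeSet × G.edgeSet) :=
  {q | q.2.1 ≠ q.2.2 ∧ q.1 ∈ Set.range (D.arc q.2.1) ∧ q.1 ∈ Set.range (D.arc q.2.2) ∧
    ¬∃ x : V, x ∈ (q.2.1 : Sym2 V) ∧ x ∈ (q.2.2 : Sym2 V) ∧ q.1 = D.pos x}

/-- The crossing number of `G`: the least `n` such that `G` has a drawing with (finitely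
many and) at most `n` crossings, each crossing being counted twice among the ordered
`crossingTriples`. -/
noncomputable def crossingNumber {V : Type*} (G : SimpleGraph V) : ℕ :=
  sInf {n : ℕ | ∃ D : Drawing G, (crossingTriples D).Finite ∧
    (crossingTriples D).ncard ≤ 2 * n}

/-- `H` is a minor of `G`: there are pairwise disjoint nonempty connected branch sets in
`G`, one for each vertex of `H`, with an edge of `G` between the branch sets of any two
adjacent vertices of `H`. -/
def IsMinor {α β : Type*} (H : SimpleGraph α) (G : SimpleGraph β) : Prop :=
  ∃ B : α → Set β,
    (∀ a, (B a).Nonempty) ∧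
    (∀ a, (G.induce (B a)).Connected) ∧
    (Pairwise fun a b => Disjoint (B a) (B b)) ∧
    ∀ a b, H.Adj a b → ∃ u ∈ B a, ∃ v ∈ B b, G.Adj u v

/-- `G` has a perfect elimination ordering: a linear order of the vertices such that the
earlier neighbours of each vertex form a clique.  A finite graph is chordal (every
induced cycle is a triangle) iff it has a perfect elimination ordering. -/
def HasPerfectEliminationOrdering {V : Type*} (G : SimpleGraph V) : Prop :=
  ∃ o : LinearOrder V, ∀ v : V, G.IsClique {w : V | G.Adj v w ∧ o.lt w v}

section VanKampen

lemma k5_lift {X : Type*} [TopologicalSpace X] [SimplyConnectedSpace X]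
    [LocallyPathConnectedSpace X] (f : X → ℂ) (hf : Continuous f) (h0 : ∀ x, f x ≠ 0) :
    ∃ L : X → ℂ, Continuous L ∧ ∀ x, Complex.exp (L x) = f x := by
  obtain ⟨x₀⟩ : Nonempty X := inferInstance
  obtain ⟨F, ⟨-, hF⟩, -⟩ := Complex.isCoveringMapOn_exp.existsUnique_continuousMap_lifts
    (⟨f, hf⟩ : C(X, ℂ)) (a₀ := x₀) (e₀ := Complex.log (f x₀)) (Complex.exp_log (h0 x₀))
    (fun a => h0 a)
  exact ⟨F, F.continuous, fun x => congrFun hF x⟩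

lemma k5_lift_unique (L L' : ℝ → ℂ) (hL : Continuous L) (hL' : Continuous L')
    (h : ∀ x, Complex.exp (L x) = Complex.exp (L' x)) : L 1 - L 0 = L' 1 - L' 0 := by
  obtain ⟨F, -, hF⟩ := Complex.isCoveringMapOn_exp.existsUnique_continuousMap_lifts
    (⟨fun x => Complex.exp (L x), by fun_prop⟩ : C(ℝ, ℂ)) (a₀ := 0) (e₀ := L 0) rfl
    (fun a => Complex.exp_ne_zero _)
  have e1 := hF ⟨L, hL⟩ ⟨rfl, rfl⟩
  have e2 := hF ⟨fun x => L' x + (L 0 - L' 0), by fun_prop⟩ ⟨by simp, by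
    ext x
    simp only [ContinuousMap.coe_mk, Function.comp_apply]
    rw [Complex.exp_add, Complex.exp_sub, h 0, h x, div_self (Complex.exp_ne_zero _), mul_one]⟩
  have e3 := congrArg (fun f : C(ℝ, ℂ) => f 1) (e1.trans e2.symm)
  simp only [ContinuousMap.coe_mk] at e3
  rw [e3]; ring

/-- Topological nonplanarity of `K₅` (van Kampen): for any continuous curves joining five
points pairwise, two curves with disjoint endpoint sets meet. -/
theorem k5_vanKampen (p : Fin 5 → ℂ) (γ : Fin 5 → Fin 5 → ℝ → ℂ)
    (hc : ∀ i j, i < j → Continuous (γ i j)) (h0 : ∀ i j, i < j → γ i j 0 = p i)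
    (h1 : ∀ i j, i < j → γ i j 1 = p j) :
    ∃ i j k l, i < j ∧ k < l ∧ i ≠ k ∧ i ≠ l ∧ j ≠ k ∧ j ≠ l ∧
      ∃ s t, γ i j s = γ k l t := by
  by_contra hcon
  have hd : ∀ i j k l, i < j → k < l → i ≠ k → i ≠ l → j ≠ k → j ≠ l →
      ∀ s t, γ i j s ≠ γ k l t := by
    intro i j k l a b c d e f s t hst
    exact hcon ⟨i, j, k, l, a, b, c, d, e, f, s, t, hst⟩
  have hpt : ∀ i j x, i < j → i ≠ x → j ≠ x → ∀ s, γ i j s ≠ p x := by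
    intro i j x hij hix hjx s
    obtain ⟨y, hy1, hy2, hy3⟩ : ∃ y : Fin 5, i ≠ y ∧ j ≠ y ∧ x ≠ y := by
      revert i j x; decide
    rcases lt_or_gt_of_ne hy3 with h | h
    · rw [← h0 x y h]; exact hd i j x y hij h hix hy1 hjx hy2 s 0
    · rw [← h1 y x h]; exact hd i j y x hij h hy1 hix hy2 hjx s 1
  have hpp : ∀ i j, i ≠ j → p i ≠ p j := by
    intro i j hij
    obtain ⟨y, hy1, hy2⟩ : ∃ y : Fin 5, i ≠ y ∧ j ≠ y := by
      revert i j; decide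
    rcases lt_or_gt_of_ne hy1 with h | h
    · rw [← h0 i y h]; exact hpt i y j h hij hy2.symm 0
    · rw [← h1 y i h]; exact hpt y i j h hy2.symm hij 1
  obtain ⟨l, hl⟩ : ∃ l : Fin 5 → Fin 5 → ℂ, l = fun x y =>
    if x < y then Complex.log (p y - p x) else Complex.log (p x - p y) + Real.pi * Complex.I :=
    ⟨_, rfl⟩
  obtain ⟨ε, hε⟩ : ∃ ε : Fin 5 → Fin 5 → ℤ, ε = fun x y => if y < x then 1 else -1 := ⟨_, rfl⟩
  have lexp : ∀ x y, x ≠ y → Complex.exp (l x y) = p y - p x := by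
    intro x y hxy
    rw [hl]
    dsimp only
    split_ifs
    · exact Complex.exp_log (sub_ne_zero.2 (hpp _ _ hxy.symm))
    · rw [Complex.exp_add, Complex.exp_log (sub_ne_zero.2 (hpp _ _ hxy)), Complex.exp_pi_mul_I]
      ring
  have lanti : ∀ x y, x ≠ y → l x y = l y x + ε x y * (Real.pi * Complex.I) := by
    intro x y hxy
    rw [hl, hε]
    dsimp only
    rcases lt_or_gt_of_ne hxy with h | h
    · simp only [h, not_lt.2 h.le, if_true, if_false]; push_cast; ring
    · simp only [h, not_lt.2 h.le, if_true, if_false]; push_cast; ring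
  have hA : ∀ i j x, ∃ n : ℤ, i < j → i ≠ x → j ≠ x → ∀ L : ℝ → ℂ, Continuous L →
      (∀ s, Complex.exp (L s) = γ i j s - p x) →
      L 1 - L 0 = l x j - l x i + n * (2 * Real.pi * Complex.I) := by
    intro i j x
    by_cases H : i < j ∧ i ≠ x ∧ j ≠ x
    · obtain ⟨hij, hix, hjx⟩ := H
      obtain ⟨L, hLc, hL⟩ := k5_lift (fun s => γ i j s - p x) ((hc i j hij).sub continuous_const)
        (fun s => sub_ne_zero.2 (hpt i j x hij hix hjx s))
      have : Complex.exp (L 1 - L 0) = Complex.exp (l x j - l x i) := by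
        rw [Complex.exp_sub, Complex.exp_sub, hL, hL, lexp _ _ hjx.symm, lexp _ _ hix.symm,
          h0 i j hij, h1 i j hij]
      obtain ⟨n, hn⟩ := Complex.exp_eq_exp_iff_exists_int.1 this
      refine ⟨n, fun _ _ _ L' hLc' hL' => ?_⟩
      rw [← hn]
      exact k5_lift_unique L' L hLc' hLc (fun s => (hL' s).trans (hL s).symm)
    · exact ⟨0, fun a b c => absurd ⟨a, b, c⟩ H⟩
  choose n hn using hA
  have key : ∀ i j k m, i < j → k < m → i ≠ k → i ≠ m → j ≠ k → j ≠ m →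
      ε k j + ε j m - ε k i - ε i m + 2 * (n i j k + n k m j - n k m i - n i j m) = 0 := by
    intro i j k m hij hkm hik him hjk hjm
    obtain ⟨M, hMc, hM⟩ := k5_lift (X := ℝ × ℝ) (fun q => γ i j q.1 - γ k m q.2)
      (((hc i j hij).comp continuous_fst).sub ((hc k m hkm).comp continuous_snd))
      (fun q => sub_ne_zero.2 (hd i j k m hij hkm hik him hjk hjm _ _))
    have a1 := hn i j k hij hik hjk (fun s => M (s, 0)) (by fun_prop)
      (fun s => by rw [hM, h0 k m hkm])
    have a2 := hn i j m hij him hjm (fun s => M (s, 1)) (by fun_prop)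
      (fun s => by rw [hM, h1 k m hkm])
    have a3 := hn k m i hkm hik.symm him.symm (fun t => M (0, t) + Real.pi * Complex.I)
      (by fun_prop)
      (fun s => by rw [Complex.exp_add, hM, h0 i j hij, Complex.exp_pi_mul_I]; ring)
    have a4 := hn k m j hkm hjk.symm hjm.symm (fun t => M (1, t) + Real.pi * Complex.I)
      (by fun_prop)
      (fun s => by rw [Complex.exp_add, hM, h1 i j hij, Complex.exp_pi_mul_I]; ring)
    have b1 := lanti k j hjk.symm
    have b2 := lanti j m hjm
    have b3 := lanti k i hik.symm
    have b4 := lanti i m him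
    have hpi : ((Real.pi : ℂ) * Complex.I) ≠ 0 :=
      mul_ne_zero (by exact_mod_cast Real.pi_ne_zero) Complex.I_ne_zero
    have : (((ε k j + ε j m - ε k i - ε i m
        + 2 * (n i j k + n k m j - n k m i - n i j m) : ℤ) : ℂ)) * (Real.pi * Complex.I) = 0 := by
      push_cast
      linear_combination a2 + a3 - a1 - a4 - b1 - b2 + b3 + b4
    rcases mul_eq_zero.1 this with h | h
    · exact_mod_cast h
    · exact absurd h hpi
  rw [hε] at key
  have q1 := key 0 1 2 3 (by decide) (by decide) (by decide) (by decide) (by decide) (by decide)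
  have q2 := key 0 2 1 3 (by decide) (by decide) (by decide) (by decide) (by decide) (by decide)
  have q3 := key 0 3 1 2 (by decide) (by decide) (by decide) (by decide) (by decide) (by decide)
  have q4 := key 0 1 2 4 (by decide) (by decide) (by decide) (by decide) (by decide) (by decide)
  have q5 := key 0 2 1 4 (by decide) (by decide) (by decide) (by decide) (by decide) (by decide)
  have q6 := key 0 4 1 2 (by decide) (by decide) (by decide) (by decide) (by decide) (by decide)
  have q7 := key 0 1 3 4 (by decide) (by decide) (by decide) (by decide) (by decide) (by decide)
  have q8 := key 0 3 1 4 (by decide) (by decide) (by decide) (by decide) (by decide) (by decide)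
  have q9 := key 0 4 1 3 (by decide) (by decide) (by decide) (by decide) (by decide) (by decide)
  have q10 := key 0 2 3 4 (by decide) (by decide) (by decide) (by decide) (by decide) (by decide)
  have q11 := key 0 3 2 4 (by decide) (by decide) (by decide) (by decide) (by decide) (by decide)
  have q12 := key 0 4 2 3 (by decide) (by decide) (by decide) (by decide) (by decide) (by decide)
  have q13 := key 1 2 3 4 (by decide) (by decide) (by decide) (by decide) (by decide) (by decide)
  have q14 := key 1 3 2 4 (by decide) (by decide) (by decide) (by decide) (by decide) (by decide)
  have q15 := key 1 4 2 3 (by decide) (by decide) (by decide) (by decide) (by decide) (by decide)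
  simp only [Fin.reduceLT, if_true, if_false] at *
  omega

end VanKampen

/-! ### Transport along isomorphisms -/

section Transport
variable {V W : Type*} {G : SimpleGraph V} {H : SimpleGraph W}

/-- Transport of a drawing along an isomorphism. -/
def Drawing.transport (φ : G ≃g H) (D : Drawing G) : Drawing H where
  pos := fun w => D.pos (φ.symm w)
  pos_inj := D.pos_inj.comp φ.symm.injective
  arc := fun e => D.arc (φ.symm.mapEdgeSet e)
  arc_cont := fun e => D.arc_cont _
  arc_inj := fun e => D.arc_inj _
  arc_ends := by
    intro e v w h
    exact D.arc_ends (φ.symm.mapEdgeSet e) (φ.symm v) (φ.symm w) (by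
      change Sym2.map φ.symm (e : Sym2 W) = _
      rw [h]; rfl)
  arc_avoid := by
    intro e x t h
    have := D.arc_avoid _ _ _ h
    change _ ∈ Sym2.map φ.symm (e : Sym2 W) at this
    rw [Sym2.mem_map] at this
    obtain ⟨y, hy, hxy⟩ := this
    rwa [← φ.symm.injective hxy]

lemma crossingNumber_set_subset (φ : G ≃g H) :
    {n : ℕ | ∃ D : Drawing G, (crossingTriples D).Finite ∧ (crossingTriples D).ncard ≤ 2 * n} ⊆
    {n : ℕ | ∃ D : Drawing H, (crossingTriples D).Finite ∧ (crossingTriples D).ncard ≤ 2 * n} := by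
  rintro n ⟨D, hf, hn⟩
  have hsub : Set.MapsTo (fun q : (ℝ × ℝ) × H.edgeSet × H.edgeSet =>
      (q.1, φ.symm.mapEdgeSet q.2.1, φ.symm.mapEdgeSet q.2.2))
      (crossingTriples (D.transport φ)) (crossingTriples D) := by
    rintro ⟨p, e, f⟩ ⟨h1, h2, h3, h4⟩
    refine ⟨fun h => h1 (φ.symm.mapEdgeSet.injective h), h2, h3, ?_⟩
    rintro ⟨x, hx1, hx2, hx3⟩
    refine h4 ⟨φ x, ?_, ?_, ?_⟩
    · change x ∈ Sym2.map φ.symm (e : Sym2 W) at hx1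
      obtain ⟨y, hy, rfl⟩ := Sym2.mem_map.1 hx1
      simpa using hy
    · change x ∈ Sym2.map φ.symm (f : Sym2 W) at hx2
      obtain ⟨y, hy, rfl⟩ := Sym2.mem_map.1 hx2
      simpa using hy
    · change p = D.pos (φ.symm (φ x))
      simpa using hx3
  have hinj : Set.InjOn (fun q : (ℝ × ℝ) × H.edgeSet × H.edgeSet =>
      (q.1, φ.symm.mapEdgeSet q.2.1, φ.symm.mapEdgeSet q.2.2))
      (crossingTriples (D.transport φ)) := by
    rintro ⟨p, e, f⟩ - ⟨p', e', f'⟩ - h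
    simp only [Prod.mk.injEq, EmbeddingLike.apply_eq_iff_eq] at h
    obtain ⟨rfl, rfl, rfl⟩ := h
    rfl
  exact ⟨D.transport φ, hf.of_injOn hsub hinj, (Set.ncard_le_ncard_of_injOn _ hsub hinj hf).trans hn⟩

lemma crossingNumber_iso (φ : G ≃g H) : crossingNumber G = crossingNumber H := by
  unfold crossingNumber
  rw [Set.Subset.antisymm (crossingNumber_set_subset φ) (crossingNumber_set_subset φ.symm)]

end Transport

/-! ### The graph -/

abbrev KE := {b : Fin 5 × Fin 5 // b.1 < b.2}
abbrev KW (m r : ℕ) := Fin m × (Fin 5 ⊕ KE × Fin r)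
abbrev KI (m r : ℕ) := Fin m × KE × Option (Fin r × Bool)

def kAdjIn {r : ℕ} : Fin 5 ⊕ KE × Fin r → Fin 5 ⊕ KE × Fin r → Prop
  | .inl a, .inl b => a ≠ b
  | .inl a, .inr b => a = b.1.1.1 ∨ a = b.1.1.2
  | .inr b, .inl a => a = b.1.1.1 ∨ a = b.1.1.2
  | .inr _, .inr _ => False

def kG (m r : ℕ) : SimpleGraph (KW m r) where
  Adj x y := x.1 = y.1 ∧ kAdjIn x.2 y.2
  symm := ⟨by
    rintro ⟨c, x⟩ ⟨c', y⟩ ⟨h, h'⟩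
    refine ⟨h.symm, ?_⟩
    rcases x with x | x <;> rcases y with y | y <;> simp only [kAdjIn] at h' ⊢
    · exact h'.symm
    · exact h'
    · exact h'⟩
  loopless := ⟨by
    rintro ⟨c, x⟩ ⟨h, h'⟩
    rcases x with x | x <;> simp [kAdjIn] at h'⟩

def kEnds {m r : ℕ} : KI m r → KW m r × KW m r
  | (c, b, none) => ((c, .inl b.1.1), (c, .inl b.1.2))
  | (c, b, some (j, h)) => ((c, .inl (if h then b.1.2 else b.1.1)), (c, .inr (b, j)))

def kEdge {m r : ℕ} (i : KI m r) : Sym2 (KW m r) := s((kEnds i).1, (kEnds i).2)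

lemma kEdge_adj {m r : ℕ} (i : KI m r) : (kG m r).Adj (kEnds i).1 (kEnds i).2 := by
  rcases i with ⟨c, b, _ | ⟨j, h⟩⟩
  · exact ⟨rfl, (ne_of_lt b.2 : b.1.1 ≠ b.1.2)⟩
  · refine ⟨rfl, ?_⟩
    cases h <;> simp [kEnds, kAdjIn]

lemma kEdge_mem {m r : ℕ} (i : KI m r) : kEdge i ∈ (kG m r).edgeSet := kEdge_adj i

lemma kEdge_surj {m r : ℕ} (e : Sym2 (KW m r)) (he : e ∈ (kG m r).edgeSet) :
    ∃ i, kEdge i = e := by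
  induction e using Sym2.ind with
  | _ x y =>
  rw [SimpleGraph.mem_edgeSet] at he
  obtain ⟨c, x⟩ := x
  obtain ⟨c', y⟩ := y
  obtain ⟨h, h'⟩ := he
  dsimp only at h h'
  subst h
  rcases x with x | ⟨b, j⟩ <;> rcases y with y | ⟨b', j'⟩ <;> simp only [kAdjIn] at h'
  · rcases lt_or_gt_of_ne h' with h | h
    · exact ⟨(c, ⟨(x, y), h⟩, none), rfl⟩
    · exact ⟨(c, ⟨(y, x), h⟩, none), Sym2.eq_swap⟩
  · rcases h' with rfl | rfl
    · exact ⟨(c, b', some (j', false)), rfl⟩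
    · exact ⟨(c, b', some (j', true)), rfl⟩
  · rcases h' with rfl | rfl
    · exact ⟨(c, b, some (j, false)), Sym2.eq_swap⟩
    · exact ⟨(c, b, some (j, true)), Sym2.eq_swap⟩

lemma kEdge_inj {m r : ℕ} : Function.Injective (kEdge : KI m r → _) := by
  rintro ⟨c, ⟨⟨b1, b2⟩, hb⟩, _ | ⟨j, h⟩⟩ ⟨c', ⟨⟨b1', b2'⟩, hb'⟩, _ | ⟨j', h'⟩⟩ H
  · simp only [kEdge, kEnds, Sym2.eq_iff, Prod.mk.injEq, Sum.inl.injEq] at H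
    rcases H with ⟨⟨rfl, rfl⟩, -, rfl⟩ | ⟨⟨rfl, rfl⟩, -, rfl⟩
    · rfl
    · exact absurd hb (not_lt.2 (le_of_lt hb'))
  · simp [kEdge, kEnds] at H
  · simp [kEdge, kEnds] at H
  · simp only [kEdge, kEnds, Sym2.eq_iff, Prod.mk.injEq, Sum.inl.injEq, Sum.inr.injEq,
      Subtype.mk.injEq, reduceCtorEq, and_false, or_false] at H
    obtain ⟨⟨rfl, h1⟩, -, ⟨rfl, rfl⟩, rfl⟩ := H
    have : b1 ≠ b2 := ne_of_lt hb
    cases h <;> cases h' <;> simp_all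

/-! ### Perfect elimination, minors, degrees -/

lemma kG_peo {V : Type*} {m r : ℕ} (φ : V ≃ KW m r) (G : SimpleGraph V)
    (hG : ∀ x y, G.Adj x y ↔ (kG m r).Adj (φ x) (φ y)) :
    HasPerfectEliminationOrdering G := by
  obtain ⟨N, ⟨ψ⟩⟩ := Finite.exists_equiv_fin (KW m r)
  let f : V → ℕ ×ₗ ℕ := fun v => toLex (if (φ v).2.isLeft then 0 else 1, (ψ (φ v) : ℕ))
  have hf : Function.Injective f := by
    intro x y h
    simp only [f, EmbeddingLike.apply_eq_iff_eq, Prod.mk.injEq] at h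
    exact φ.injective (ψ.injective (Fin.ext h.2))
  refine ⟨LinearOrder.lift' f hf, ?_⟩
  intro v x hx y hy hxy
  obtain ⟨hx1, hx2⟩ := hx
  obtain ⟨hy1, hy2⟩ := hy
  change f x < f v at hx2
  change f y < f v at hy2
  have hxy' : φ x ≠ φ y := fun h => hxy (φ.injective h)
  rw [hG] at hx1 hy1 ⊢
  simp only [f, Prod.Lex.toLex_lt_toLex] at hx2 hy2
  generalize φ v = v' at *
  generalize φ x = x' at *
  generalize φ y = y' at *
  obtain ⟨c, v⟩ := v'
  obtain ⟨c', x⟩ := x'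
  obtain ⟨c'', y⟩ := y'
  obtain ⟨h1, h1'⟩ := hx1
  obtain ⟨h2, h2'⟩ := hy1
  dsimp only at h1 h2 h1' h2'
  subst h1 h2
  refine ⟨rfl, ?_⟩
  rcases v with v | v <;> rcases x with x | x <;> rcases y with y | y <;>
    simp_all [kAdjIn]

lemma kG_minor {V : Type*} {m r : ℕ} (φ : V ≃ KW m r) (G : SimpleGraph V)
    (hG : ∀ x y, G.Adj x y ↔ (kG m r).Adj (φ x) (φ y)) :
    ¬ IsMinor (completeBipartiteGraph (Fin 3) (Fin 3)) G := by
  rintro ⟨B, hne, hconn, hdisj, hadj⟩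
  have hcopy : ∀ a, ∀ x ∈ B a, ∀ y ∈ B a, (φ x).1 = (φ y).1 := by
    intro a x hx y hy
    obtain ⟨w⟩ := (hconn a).preconnected ⟨x, hx⟩ ⟨y, hy⟩
    suffices H : ∀ u v : B a, ∀ w : (G.induce (B a)).Walk u v, (φ u).1 = (φ v).1 from H _ _ w
    intro u v w
    induction w with
    | nil => rfl
    | cons h _ ih => exact ((hG _ _).1 h).1.trans ih
  have hcopy2 : ∀ a b, (completeBipartiteGraph (Fin 3) (Fin 3)).Adj a b →
      ∀ x ∈ B a, ∀ y ∈ B b, (φ x).1 = (φ y).1 := by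
    intro a b hab x hx y hy
    obtain ⟨u, hu, v, hv, huv⟩ := hadj a b hab
    exact (hcopy a x hx u hu).trans ((((hG _ _).1 huv).1).trans (hcopy b v hv y hy))
  have hcopy3 : ∀ a b, ∀ x ∈ B a, ∀ y ∈ B b, (φ x).1 = (φ y).1 := by
    have A : ∀ i j : Fin 3, (completeBipartiteGraph (Fin 3) (Fin 3)).Adj (.inl i) (.inr j) := by
      intro i j; simp
    intro a b x hx y hy
    obtain ⟨z, hz⟩ := hne (.inl 0)
    obtain ⟨z', hz'⟩ := hne (.inr 0)
    rcases a with a | a <;> rcases b with b | b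
    · exact (hcopy2 _ _ (A a 0) x hx z' hz').trans (hcopy2 _ _ (A b 0) y hy z' hz').symm
    · exact hcopy2 _ _ (A a b) x hx y hy
    · exact (hcopy2 _ _ (A b a) y hy x hx).symm
    · exact (hcopy2 _ _ (A 0 a) z hz x hx).symm.trans (hcopy2 _ _ (A 0 b) z hz y hy)
  -- every branch set contains a vertex of `K₅`
  have hmain : ∀ a, ∃ x ∈ B a, ∃ v : Fin 5, (φ x).2 = .inl v := by
    intro a
    by_contra hcon
    have hinr : ∀ x ∈ B a, ∃ b, (φ x).2 = .inr b := by
      intro x hx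
      rcases h : (φ x).2 with v | b
      · exact absurd ⟨x, hx, v, h⟩ hcon
      · exact ⟨b, rfl⟩
    obtain ⟨x, hx⟩ := hne a
    have hsing : ∀ y ∈ B a, y = x := by
      intro y hy
      obtain ⟨w⟩ := (hconn a).preconnected ⟨y, hy⟩ ⟨x, hx⟩
      cases w with
      | nil => rfl
      | cons h _ =>
        rename_i u _
        have := ((hG _ _).1 h).2
        obtain ⟨b, hb⟩ := hinr _ hy
        obtain ⟨b', hb'⟩ := hinr _ u.2
        simp only [Function.Embedding.subtype_apply, hb, hb', kAdjIn] at this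
    obtain ⟨⟨b, j⟩, hb⟩ := hinr x hx
    -- three neighbours
    obtain ⟨N, hN, hNinj⟩ : ∃ N : Fin 3 → Fin 3 ⊕ Fin 3,
        (∀ i, (completeBipartiteGraph (Fin 3) (Fin 3)).Adj a (N i)) ∧ Function.Injective N := by
      rcases a with a | a
      · exact ⟨.inr, by simp, Sum.inr_injective⟩
      · exact ⟨.inl, by simp, Sum.inl_injective⟩
    have hch : ∀ i, ∃ v ∈ B (N i), (φ v) = ((φ x).1, .inl b.1.1) ∨ (φ v) = ((φ x).1, .inl b.1.2) := by
      intro i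
      obtain ⟨u, hu, v, hv, huv⟩ := hadj a (N i) (hN i)
      rw [hsing u hu] at huv
      obtain ⟨h1, h2⟩ := (hG _ _).1 huv
      refine ⟨v, hv, ?_⟩
      rw [hb] at h2
      rcases hh : φ v with ⟨c, v' | v'⟩
      · rw [hh] at h1 h2
        simp only [kAdjIn] at h2
        rcases h2 with rfl | rfl
        · left; rw [h1]
        · right; rw [h1]
      · rw [hh] at h2
        simp only [kAdjIn] at h2
    choose g hg1 hg2 using hch
    have ginj : Function.Injective g := by
      intro i i' h
      by_contra hne'
      exact Set.disjoint_left.1 (hdisj (fun h' => hne' (hNinj h'))) (hg1 i) (h ▸ hg1 i')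
    have key : ∀ i i', φ (g i) = φ (g i') → i = i' := fun i i' h => ginj (φ.injective h)
    rcases hg2 0 with h0 | h0 <;> rcases hg2 1 with h1 | h1 <;> rcases hg2 2 with h2 | h2
    all_goals first
      | exact absurd (key 0 1 (h0.trans h1.symm)) (by decide)
      | exact absurd (key 0 2 (h0.trans h2.symm)) (by decide)
      | exact absurd (key 1 2 (h1.trans h2.symm)) (by decide)
  choose x hx v hv using hmain
  have vinj : Function.Injective v := by
    intro a a' h
    by_contra hne'
    have : x a = x a' := φ.injective (Prod.ext (hcopy3 _ _ _ (hx a) _ (hx a')) (by rw [hv, hv, h]))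
    exact Set.disjoint_left.1 (hdisj hne') (hx a) (this ▸ hx a')
  have := Fintype.card_le_of_injective v vinj
  simp at this

lemma kG_maxDegree {V : Type*} [Fintype V] {m r : ℕ} (hm : 0 < m) (φ : V ≃ KW m r)
    (G : SimpleGraph V) [DecidableRel G.Adj]
    (hG : ∀ x y, G.Adj x y ↔ (kG m r).Adj (φ x) (φ y)) :
    G.maxDegree = 4 * (r + 1) := by
  classical
  have h4 : ∀ a : Fin 5, (univ.filter (fun b : KE => a = b.1.1 ∨ a = b.1.2)).card = 4 := by decide
  have hdeg : ∀ x, ∀ c a, φ x = (c, .inl a) → G.degree x = 4 * (r + 1) := by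
    intro x c a hx
    have : (G.neighborFinset x).map φ.toEmbedding = ({c} : Finset (Fin m)) ×ˢ
        ((univ.erase a).disjSum
          ((univ.filter (fun b : KE => a = b.1.1 ∨ a = b.1.2)) ×ˢ (univ : Finset (Fin r)))) := by
      ext ⟨c', y⟩
      simp only [mem_map_equiv, SimpleGraph.mem_neighborFinset, hG, Equiv.apply_symm_apply, hx,
        mem_product, mem_singleton]
      rcases y with y | y
      · simp only [kG, kAdjIn, inl_mem_disjSum, mem_erase, mem_univ, and_true]
        tauto
      · simp only [kG, kAdjIn, inr_mem_disjSum, mem_product, mem_filter, mem_univ, and_true,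
          true_and]
        tauto
    rw [← SimpleGraph.card_neighborFinset_eq_degree, ← card_map φ.toEmbedding, this,
      card_product, card_disjSum, card_product, h4, card_erase_of_mem (mem_univ _)]
    simp
    ring
  apply le_antisymm
  · apply SimpleGraph.maxDegree_le_of_forall_degree_le
    intro x
    rcases hx : φ x with ⟨c, a | ⟨b, j⟩⟩
    · exact (hdeg x c a hx).le
    · have : (G.neighborFinset x).map φ.toEmbedding ⊆ {(c, .inl b.1.1), (c, .inl b.1.2)} := by
        rintro ⟨c', y⟩ h
        simp only [mem_map_equiv, SimpleGraph.mem_neighborFinset, hG, Equiv.apply_symm_apply,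
          hx] at h
        obtain ⟨h1, h2⟩ := h
        dsimp only at h1 h2
        subst h1
        rcases y with y | y
        · simp only [kAdjIn] at h2
          rcases h2 with rfl | rfl <;> simp
        · simp only [kAdjIn] at h2
      rw [← SimpleGraph.card_neighborFinset_eq_degree, ← card_map φ.toEmbedding]
      exact (card_le_card this).trans (card_le_two.trans (by omega))
  · rw [← hdeg (φ.symm (⟨0, hm⟩, .inl 0)) ⟨0, hm⟩ 0 (by simp)]
    exact G.degree_le_maxDegree _

lemma kW_card (m r : ℕ) : Fintype.card (KW m r) = m * (5 * (2 * r + 1)) := by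
  have : Fintype.card KE = 10 := by decide
  simp only [Fintype.card_prod, Fintype.card_sum, Fintype.card_fin, this]
  ring

/-! ### Lower bound -/

lemma drawing_path {V : Type*} {G : SimpleGraph V} (D : Drawing G) (v w : V) (h : G.Adj v w) :
    ∃ γ : Path (D.pos v) (D.pos w), ∀ t, γ t ∈ Set.range (D.arc ⟨s(v, w), h⟩) := by
  rcases D.arc_ends ⟨s(v, w), h⟩ v w rfl with ⟨h0, h1⟩ | ⟨h0, h1⟩
  · exact ⟨⟨⟨D.arc ⟨s(v, w), h⟩, D.arc_cont _⟩, h0, h1⟩, fun t => ⟨t, rfl⟩⟩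
  · let γ : Path (D.pos w) (D.pos v) := ⟨⟨D.arc ⟨s(v, w), h⟩, D.arc_cont _⟩, h0, h1⟩
    exact ⟨γ.symm, fun t => ⟨unitInterval.symm t, rfl⟩⟩

lemma strand_path {m r : ℕ} (D : Drawing (kG m r)) (c : Fin m) (b : KE) (s : Option (Fin r)) :
    ∃ γ : Path (D.pos (c, .inl b.1.1)) (D.pos (c, .inl b.1.2)), ∀ t,
      ∃ o : Option (Fin r × Bool), o.map Prod.fst = s ∧
        γ t ∈ Set.range (D.arc ⟨kEdge (c, b, o), kEdge_mem _⟩) := by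
  rcases s with _ | j
  · obtain ⟨γ, hγ⟩ := drawing_path D _ _ (kEdge_adj (c, b, (none : Option (Fin r × Bool))))
    exact ⟨γ, fun t => ⟨none, rfl, hγ t⟩⟩
  · obtain ⟨γ, hγ⟩ : ∃ γ : Path (D.pos (c, .inl b.1.1)) (D.pos (c, .inr (b, j))), ∀ t,
        γ t ∈ Set.range (D.arc ⟨kEdge (c, b, some (j, false)), kEdge_mem _⟩) :=
      drawing_path D _ _ (kEdge_adj (c, b, some (j, false)))
    obtain ⟨γ', hγ'⟩ : ∃ γ : Path (D.pos (c, .inl b.1.2)) (D.pos (c, .inr (b, j))), ∀ t,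
        γ t ∈ Set.range (D.arc ⟨kEdge (c, b, some (j, true)), kEdge_mem _⟩) :=
      drawing_path D _ _ (kEdge_adj (c, b, some (j, true)))
    refine ⟨Path.trans γ γ'.symm, fun t => ?_⟩
    have ht : (Path.trans γ γ'.symm) t ∈ Set.range (Path.trans γ γ'.symm) := ⟨t, rfl⟩
    rw [Path.trans_range, Path.symm_range] at ht
    rcases ht with ⟨t', ht'⟩ | ⟨t', ht'⟩
    · exact ⟨some (j, false), rfl, by rw [← ht']; exact hγ t'⟩
    · exact ⟨some (j, true), rfl, by rw [← ht']; exact hγ' t'⟩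

lemma kEdge_disjoint {m r : ℕ} (c : Fin m) (b b' : KE) (o o' : Option (Fin r × Bool))
    (h1 : b.1.1 ≠ b'.1.1) (h2 : b.1.1 ≠ b'.1.2) (h3 : b.1.2 ≠ b'.1.1) (h4 : b.1.2 ≠ b'.1.2)
    (x : KW m r) (hx : x ∈ kEdge (c, b, o)) (hx' : x ∈ kEdge (c, b', o')) : False := by
  have hb : b ≠ b' := fun h => h1 (by rw [h])
  rcases o with _ | ⟨j, _ | _⟩ <;> rcases o' with _ | ⟨j', _ | _⟩ <;>
    simp only [kEdge, kEnds, Sym2.mem_iff] at hx hx' <;>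
    rcases hx with rfl | rfl <;>
    simp_all

lemma exists_crossing {m r : ℕ} (D : Drawing (kG m r)) (c : Fin m) (σ : KE → Option (Fin r)) :
    ∃ b b' : KE, ∃ o o' : Option (Fin r × Bool), ∃ p : ℝ × ℝ, b ≠ b' ∧
      o.map Prod.fst = σ b ∧ o'.map Prod.fst = σ b' ∧
      (p, ⟨kEdge (c, b, o), kEdge_mem _⟩, ⟨kEdge (c, b', o'), kEdge_mem _⟩) ∈
        crossingTriples D := by
  choose Γ hΓ using fun b => strand_path D c b (σ b)
  let toC : ℝ × ℝ → ℂ := fun q => ⟨q.1, q.2⟩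
  have toC_inj : Function.Injective toC := by
    intro a b h
    exact Prod.ext (congrArg Complex.re h) (congrArg Complex.im h)
  have toC_cont : Continuous toC := Complex.equivRealProdCLM.symm.continuous
  obtain ⟨i, j, k, l, hij, hkl, hik, hil, hjk, hjl, s, t, hst⟩ := k5_vanKampen
    (fun i => toC (D.pos (c, .inl i)))
    (fun i j t => if h : i < j then toC ((Γ ⟨(i, j), h⟩).extend t) else 0)
    (by
      intro i j h
      simp only [h, dite_true]
      exact toC_cont.comp (Γ ⟨(i, j), h⟩).continuous_extend)
    (by intro i j h; simp [h])
    (by intro i j h; simp [h])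
  simp only [hij, hkl, dite_true] at hst
  have hst := toC_inj hst
  obtain ⟨o, ho, hp⟩ := hΓ ⟨(i, j), hij⟩ (Set.projIcc 0 1 zero_le_one s)
  obtain ⟨o', ho', hp'⟩ := hΓ ⟨(k, l), hkl⟩ (Set.projIcc 0 1 zero_le_one t)
  refine ⟨⟨(i, j), hij⟩, ⟨(k, l), hkl⟩, o, o', (Γ ⟨(i, j), hij⟩).extend s, ?_, ho, ho', ?_, ?_, ?_, ?_⟩
  · intro h
    simp only [Subtype.mk.injEq, Prod.mk.injEq] at h
    exact hik h.1
  · intro h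
    have := kEdge_inj (congrArg Subtype.val h)
    simp only [Prod.mk.injEq, Subtype.mk.injEq] at this
    exact hik this.2.1.1
  · exact hp
  · rw [hst]; exact hp'
  · rintro ⟨x, hx, hx', -⟩
    exact kEdge_disjoint c ⟨(i, j), hij⟩ ⟨(k, l), hkl⟩ o o' hik hil hjk hjl x hx hx'

lemma lower_bound {m r : ℕ} (D : Drawing (kG m r)) (hfin : (crossingTriples D).Finite) :
    2 * (m * (r + 1) ^ 2) ≤ (crossingTriples D).ncard := by
  classical
  let R : (Fin m × (KE → Option (Fin r))) →
      ((ℝ × ℝ) × (kG m r).edgeSet × (kG m r).edgeSet) → Prop := fun a q =>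
    ∃ b b' : KE, ∃ o o' : Option (Fin r × Bool), b ≠ b' ∧
      o.map Prod.fst = a.2 b ∧ o'.map Prod.fst = a.2 b' ∧
      (q.2.1 : Sym2 _) = kEdge (a.1, b, o) ∧ (q.2.2 : Sym2 _) = kEdge (a.1, b', o')
  have hKE : Fintype.card KE = 10 := by decide
  have hcard8 : ∀ b b' : KE, b ≠ b' → Fintype.card {x : KE // x ≠ b ∧ x ≠ b'} = 8 := by decide
  have main := Finset.card_mul_le_card_mul (s := (univ : Finset (Fin m × (KE → Option (Fin r)))))
    (t := hfin.toFinset) R (m := 2) (n := (r + 1) ^ 8) ?_ ?_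
  · rw [Set.ncard_eq_toFinset_card _ hfin]
    simp only [card_univ, Fintype.card_prod, Fintype.card_fin, Fintype.card_pi, prod_const,
      Fintype.card_option, hKE] at main
    have hpos : 0 < (r + 1) ^ 8 := by positivity
    refine Nat.le_of_mul_le_mul_right ?_ hpos
    calc _ = m * (r + 1) ^ 10 * 2 := by ring
      _ ≤ _ := main
  · rintro ⟨c, σ⟩ -
    obtain ⟨b, b', o, o', p, hb, ho, ho', hq⟩ := exists_crossing D c σ
    rw [Nat.succ_le_iff, one_lt_card]
    refine ⟨_, mem_bipartiteAbove _ |>.2 ⟨hfin.mem_toFinset.2 hq, b, b', o, o', hb, ho, ho', rfl, rfl⟩,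
      (p, ⟨kEdge (c, b', o'), kEdge_mem _⟩, ⟨kEdge (c, b, o), kEdge_mem _⟩),
      mem_bipartiteAbove _ |>.2 ⟨hfin.mem_toFinset.2 ?_, b', b, o', o, hb.symm, ho', ho, rfl, rfl⟩, ?_⟩
    · obtain ⟨h1, h2, h3, h4⟩ := hq
      exact ⟨h1.symm, h3, h2, fun ⟨x, hx, hx', hx''⟩ => h4 ⟨x, hx', hx, hx''⟩⟩
    · intro h
      exact hq.1 (congrArg (fun q => q.2.1) h)
  · intro q hq
    by_cases hex : ∃ a, R a q
    swap
    · have : bipartiteBelow R univ q = ∅ := by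
        ext a
        simp only [mem_bipartiteBelow, notMem_empty, iff_false]
        rintro ⟨-, h⟩
        exact hex ⟨a, h⟩
      rw [this]; simp
    obtain ⟨⟨c, σ⟩, b, b', o, o', hb, ho, ho', hq1, hq2⟩ := hex
    have hall : ∀ a ∈ bipartiteBelow R univ q,
        a.1 = c ∧ a.2 b = o.map Prod.fst ∧ a.2 b' = o'.map Prod.fst := by
      rintro ⟨c1, σ1⟩ ha
      obtain ⟨-, b1, b1', o1, o1', hb1, ho1, ho1', hq1', hq2'⟩ := (mem_bipartiteBelow _).1 ha
      have e1 := kEdge_inj (hq1.symm.trans hq1')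
      have e2 := kEdge_inj (hq2.symm.trans hq2')
      simp only [Prod.mk.injEq] at e1 e2
      obtain ⟨rfl, rfl, rfl⟩ := e1
      obtain ⟨-, rfl, rfl⟩ := e2
      exact ⟨rfl, ho1.symm, ho1'.symm⟩
    calc (bipartiteBelow R univ q).card
        ≤ (univ : Finset ({x : KE // x ≠ b ∧ x ≠ b'} → Option (Fin r))).card := by
          apply Finset.card_le_card_of_injOn (fun a x => a.2 x.1) (fun _ _ => mem_univ _)
          intro a ha a' ha' h
          obtain ⟨h1, h2, h3⟩ := hall a ha
          obtain ⟨h1', h2', h3'⟩ := hall a' ha'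
          refine Prod.ext (h1.trans h1'.symm) (funext fun x => ?_)
          by_cases hx : x = b
          · rw [hx, h2, h2']
          by_cases hx' : x = b'
          · rw [hx', h3, h3']
          exact congrFun h ⟨x, hx, hx'⟩
      _ = (r + 1) ^ 8 := by
          simp only [card_univ, Fintype.card_pi, prod_const, Fintype.card_option, Fintype.card_fin,
            hcard8 b b' hb]

/-! ### Upper bound: an explicit straight-line drawing -/

def kvx : Fin 5 → ℤ := ![-240, 240, 0, -20, 20]
def kvy : Fin 5 → ℤ := ![0, 0, 160, 40, 40]

/-- The only crossing pair of bundles. -/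
def kX (b b' : KE) : Prop :=
  (b.1 = (0, 4) ∧ b'.1 = (1, 3)) ∨ (b.1 = (1, 3) ∧ b'.1 = (0, 4))

instance (b b' : KE) : Decidable (kX b b') := by unfold kX; infer_instance

def kl2v (d : ℤ × ℤ) (a : Fin 5) : ℤ := 2 * (d.1 * kvx a + d.2 * kvy a)
def kl2a (d : ℤ × ℤ) (b : KE) : ℤ :=
  d.1 * (kvx b.1.1 + kvx b.1.2) + d.2 * (kvy b.1.1 + kvy b.1.2 + 2)

def kdirs : List (ℤ × ℤ) :=
  [(-2, -3), (2, -3), (-1, 7), (1, 2), (-1, -7), (-1, 1), (1, -7), (1, 7), (1, 0), (-1, 2),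
    (-1, 0), (1, 1), (-1, -6), (-1, 6), (1, -6), (1, 6)]

def kSepBy (b b' : KE) (d : ℤ × ℤ) (g : ℤ) : Prop :=
  kl2v d b'.1.1 ≤ g ∧ kl2v d b'.1.2 ≤ g ∧ kl2a d b' ≤ g ∧ g < kl2a d b ∧
    ((g < kl2v d b.1.1 ∧ g < kl2v d b.1.2) ∨
      ((b.1.1 = b'.1.1 ∨ b.1.1 = b'.1.2) ∧ g ≤ kl2v d b.1.1 ∧ g < kl2v d b.1.2) ∨
      ((b.1.2 = b'.1.1 ∨ b.1.2 = b'.1.2) ∧ g ≤ kl2v d b.1.2 ∧ g < kl2v d b.1.1))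

instance (b b' : KE) (d : ℤ × ℤ) (g : ℤ) : Decidable (kSepBy b b' d g) := by
  unfold kSepBy; infer_instance

lemma kSep_all : ∀ b b' : KE, b ≠ b' → ¬ kX b b' → ∃ d ∈ kdirs,
    kSepBy b b' d (max (max (kl2v d b'.1.1) (kl2v d b'.1.2)) (kl2a d b')) := by
  decide +kernel

lemma kvx_inj : Function.Injective kvx := by decide

lemma kvx_ne (b : KE) : (kvx b.1.2 : ℝ) - kvx b.1.1 ≠ 0 := by
  rw [sub_ne_zero]
  exact_mod_cast fun h => (ne_of_lt b.2) (kvx_inj h).symm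

/-- Points of half a strand. -/
def kHalf (b : KE) (h : Bool) (y X Y : ℝ) : Prop :=
  ∃ τ : ℝ, 0 ≤ τ ∧ τ ≤ 1 ∧
    X = (1 - τ) * kvx (if h then b.1.2 else b.1.1) + τ * ((kvx b.1.1 + kvx b.1.2) / 2) ∧
    Y = (1 - τ) * kvy (if h then b.1.2 else b.1.1) + τ * ((kvy b.1.1 + kvy b.1.2) / 2 + y)

def kTri (b : KE) (X Y : ℝ) : Prop :=
  ∃ α β γ : ℝ, 0 ≤ α ∧ 0 ≤ β ∧ 0 ≤ γ ∧ α + β + γ = 1 ∧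
    X = α * kvx b.1.1 + β * kvx b.1.2 + γ * ((kvx b.1.1 + kvx b.1.2) / 2) ∧
    Y = α * kvy b.1.1 + β * kvy b.1.2 + γ * ((kvy b.1.1 + kvy b.1.2) / 2 + 1)

lemma kHalf.tri {b : KE} {h : Bool} {y X Y : ℝ} (H : kHalf b h y X Y) (h0 : 0 ≤ y) (h1 : y ≤ 1) :
    kTri b X Y := by
  obtain ⟨τ, t0, t1, rfl, rfl⟩ := H
  have a1 : 0 ≤ τ * (1 - y) := mul_nonneg t0 (by linarith)
  have a2 : 0 ≤ τ * y := mul_nonneg t0 h0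
  cases h
  · refine ⟨1 - τ + τ * (1 - y) / 2, τ * (1 - y) / 2, τ * y, by linarith, by linarith, a2,
      by ring, ?_, ?_⟩
    · simp only [Bool.false_eq_true, if_false]; ring
    · simp only [Bool.false_eq_true, if_false]; ring
  · refine ⟨τ * (1 - y) / 2, 1 - τ + τ * (1 - y) / 2, τ * y, by linarith, by linarith, a2,
      by ring, ?_, ?_⟩
    · simp only [if_true]; ring
    · simp only [if_true]; ring

lemma kTri.bound {b : KE} {X Y : ℝ} (H : kTri b X Y) : -240 ≤ X ∧ X ≤ 240 := by
  obtain ⟨α, β, γ, ha, hb, hc, hs, rfl, -⟩ := H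
  have hv : ∀ a, -240 ≤ kvx a ∧ kvx a ≤ 240 := by decide
  have h1 : (-240 : ℝ) ≤ kvx b.1.1 ∧ (kvx b.1.1 : ℝ) ≤ 240 := by exact_mod_cast hv b.1.1
  have h2 : (-240 : ℝ) ≤ kvx b.1.2 ∧ (kvx b.1.2 : ℝ) ≤ 240 := by exact_mod_cast hv b.1.2
  constructor <;> nlinarith [mul_nonneg ha (sub_nonneg.2 h1.1), mul_nonneg ha (sub_nonneg.2 h1.2),
    mul_nonneg hb (sub_nonneg.2 h2.1), mul_nonneg hb (sub_nonneg.2 h2.2),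
    mul_nonneg hc (sub_nonneg.2 h1.1), mul_nonneg hc (sub_nonneg.2 h1.2),
    mul_nonneg hc (sub_nonneg.2 h2.1), mul_nonneg hc (sub_nonneg.2 h2.2)]

lemma kTri_sep {b b' : KE} (hb : b ≠ b') (hX : ¬ kX b b') {X Y : ℝ} (H : kTri b X Y)
    (H' : kTri b' X Y) : ∃ a, (a = b.1.1 ∨ a = b.1.2) ∧ (a = b'.1.1 ∨ a = b'.1.2) ∧
      X = kvx a ∧ Y = kvy a := by
  obtain ⟨d, -, hd⟩ := kSep_all b b' hb hX
  generalize max (max (kl2v d b'.1.1) (kl2v d b'.1.2)) (kl2a d b') = g at hd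
  obtain ⟨α, β, γ, ha, hβ, hc, hs, hx, hy⟩ := H
  obtain ⟨α', β', γ', ha', hβ', hc', hs', hx', hy'⟩ := H'
  obtain ⟨s1, s2, s3, s4, s5⟩ := hd
  have r1 : (kl2v d b'.1.1 : ℝ) ≤ g := by exact_mod_cast s1
  have r2 : (kl2v d b'.1.2 : ℝ) ≤ g := by exact_mod_cast s2
  have r3 : (kl2a d b' : ℝ) ≤ g := by exact_mod_cast s3
  have r4 : (g : ℝ) < kl2a d b := by exact_mod_cast s4
  have e1 : 2 * (d.1 * X + d.2 * Y) = α * kl2v d b.1.1 + β * kl2v d b.1.2 + γ * kl2a d b := by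
    rw [hx, hy]; simp only [kl2v, kl2a]; push_cast; ring
  have e2 : 2 * (d.1 * X + d.2 * Y) =
      α' * kl2v d b'.1.1 + β' * kl2v d b'.1.2 + γ' * kl2a d b' := by
    rw [hx', hy']; simp only [kl2v, kl2a]; push_cast; ring
  have u : 2 * (d.1 * X + d.2 * Y) ≤ g := by
    rw [e2]
    have : α' * g + β' * g + γ' * g = (g : ℝ) := by rw [← add_mul, ← add_mul, hs', one_mul]
    linarith [mul_le_mul_of_nonneg_left r1 ha', mul_le_mul_of_nonneg_left r2 hβ',
      mul_le_mul_of_nonneg_left r3 hc']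
  rw [e1] at u
  -- the weighted excess vanishes
  have w : α * (kl2v d b.1.1 - g) + β * (kl2v d b.1.2 - g) + γ * (kl2a d b - g) ≤ 0 := by
    have : α * g + β * g + γ * g = (g : ℝ) := by rw [← add_mul, ← add_mul, hs, one_mul]
    linarith
  have key : ∀ {a b c x y z : ℝ}, 0 ≤ a → 0 ≤ b → 0 ≤ c → 0 ≤ x → 0 < y → 0 < z →
      a * x + b * y + c * z ≤ 0 → b = 0 ∧ c = 0 := by
    intro a b c x y z h1 h2 h3 h4 h5 h6 h7
    have q1 := mul_nonneg h1 h4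
    have q2 := mul_nonneg h2 h5.le
    have q3 := mul_nonneg h3 h6.le
    have z2 : b * y = 0 := by linarith
    have z3 : c * z = 0 := by linarith
    exact ⟨(mul_eq_zero.1 z2).resolve_right h5.ne', (mul_eq_zero.1 z3).resolve_right h6.ne'⟩
  rcases s5 with ⟨t1, t2⟩ | ⟨t0, t1, t2⟩ | ⟨t0, t1, t2⟩
  · have v1 : (g : ℝ) < kl2v d b.1.1 := by exact_mod_cast t1
    have v2 : (g : ℝ) < kl2v d b.1.2 := by exact_mod_cast t2
    obtain ⟨z1, z2⟩ := key ha hβ hc (sub_pos.2 v1).le (sub_pos.2 v2) (sub_pos.2 r4) w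
    rw [z1, z2] at w hs
    have : α = 1 := by linarith
    rw [this] at w
    linarith
  · have v1 : (g : ℝ) ≤ kl2v d b.1.1 := by exact_mod_cast t1
    have v2 : (g : ℝ) < kl2v d b.1.2 := by exact_mod_cast t2
    obtain ⟨z1, z2⟩ := key ha hβ hc (sub_nonneg.2 v1) (sub_pos.2 v2) (sub_pos.2 r4) w
    rw [z1, z2] at hs hx hy
    have : α = 1 := by linarith
    refine ⟨b.1.1, .inl rfl, t0, ?_, ?_⟩
    · rw [hx, this]; ring
    · rw [hy, this]; ring
  · have v1 : (g : ℝ) ≤ kl2v d b.1.2 := by exact_mod_cast t1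
    have v2 : (g : ℝ) < kl2v d b.1.1 := by exact_mod_cast t2
    obtain ⟨z1, z2⟩ := key hβ ha hc (sub_nonneg.2 v1) (sub_pos.2 v2) (sub_pos.2 r4) (by linarith)
    rw [z1, z2] at hs hx hy
    have : β = 1 := by linarith
    refine ⟨b.1.2, .inr rfl, t0, ?_, ?_⟩
    · rw [hx, this]; ring
    · rw [hy, this]; ring

lemma kHalf_strand {b : KE} {h h' : Bool} {y y' X Y : ℝ} (H : kHalf b h y X Y)
    (H' : kHalf b h' y' X Y) (hy : y ≠ y') :
    (X = kvx b.1.1 ∧ Y = kvy b.1.1) ∨ (X = kvx b.1.2 ∧ Y = kvy b.1.2) := by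
  obtain ⟨τ, t0, t1, hx, hY⟩ := H
  obtain ⟨τ', t0', t1', hx', hY'⟩ := H'
  have hd := kvx_ne b
  have hyy : y - y' ≠ 0 := sub_ne_zero.2 hy
  cases h <;> cases h' <;> simp only [Bool.false_eq_true, if_false, if_true] at hx hY hx' hY'
  · have e : (τ - τ') * ((kvx b.1.2 : ℝ) - kvx b.1.1) = 0 := by linarith
    have e' : τ' = τ := by
      have := (mul_eq_zero.1 e).resolve_right hd; linarith
    subst e'
    have : τ' * (y - y') = 0 := by linarith
    have := (mul_eq_zero.1 this).resolve_right hyy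
    left
    rw [hx, hY, this]; constructor <;> ring
  · have e : (2 - τ - τ') * ((kvx b.1.2 : ℝ) - kvx b.1.1) = 0 := by linarith
    have := (mul_eq_zero.1 e).resolve_right hd
    have e1 : τ = 1 := by linarith
    have e2 : τ' = 1 := by linarith
    subst e1 e2
    exact absurd (by linarith) hy
  · have e : (2 - τ - τ') * ((kvx b.1.2 : ℝ) - kvx b.1.1) = 0 := by linarith
    have := (mul_eq_zero.1 e).resolve_right hd
    have e1 : τ = 1 := by linarith
    have e2 : τ' = 1 := by linarith
    subst e1 e2
    exact absurd (by linarith) hy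
  · have e : (τ - τ') * ((kvx b.1.2 : ℝ) - kvx b.1.1) = 0 := by linarith
    have e' : τ' = τ := by
      have := (mul_eq_zero.1 e).resolve_right hd; linarith
    subst e'
    have : τ' * (y - y') = 0 := by linarith
    have := (mul_eq_zero.1 this).resolve_right hyy
    right
    rw [hx, hY, this]; constructor <;> ring

lemma kHalf_mid {b : KE} {h h' : Bool} {y X Y : ℝ} (H : kHalf b h y X Y)
    (H' : kHalf b h' y X Y) (hh : h ≠ h') :
    X = (kvx b.1.1 + kvx b.1.2) / 2 ∧ Y = (kvy b.1.1 + kvy b.1.2) / 2 + y := by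
  obtain ⟨τ, t0, t1, hx, hY⟩ := H
  obtain ⟨τ', t0', t1', hx', hY'⟩ := H'
  have hd := kvx_ne b
  have e1 : τ = 1 := by
    cases h <;> cases h' <;>
      simp only [Bool.false_eq_true, if_false, if_true, ne_eq, not_true] at hx hx' hh
    · have e : (2 - τ - τ') * ((kvx b.1.2 : ℝ) - kvx b.1.1) = 0 := by linarith
      have := (mul_eq_zero.1 e).resolve_right hd
      linarith
    · have e : (2 - τ - τ') * ((kvx b.1.2 : ℝ) - kvx b.1.1) = 0 := by linarith
      have := (mul_eq_zero.1 e).resolve_right hd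
      linarith
  rw [hx, hY, e1]
  constructor <;> ring

lemma kHalf_end {b : KE} {h : Bool} {y Y : ℝ}
    (H : kHalf b h y (kvx (if h then b.1.1 else b.1.2)) Y) : False := by
  obtain ⟨τ, t0, t1, hx, -⟩ := H
  have hd := kvx_ne b
  cases h <;> simp only [Bool.false_eq_true, if_false, if_true] at hx
  · have e : (2 - τ) * ((kvx b.1.2 : ℝ) - kvx b.1.1) = 0 := by linarith
    have := (mul_eq_zero.1 e).resolve_right hd
    linarith
  · have e : (2 - τ) * ((kvx b.1.2 : ℝ) - kvx b.1.1) = 0 := by linarith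
    have := (mul_eq_zero.1 e).resolve_right hd
    linarith

lemma kX_aux {b b' : KE} (hb : b.1 = (0, 4)) (hb' : b'.1 = (1, 3)) {h h' : Bool}
    {y y' X Y : ℝ} (H : kHalf b h y X Y) (H' : kHalf b' h' y' X Y) :
    h = true ∧ h' = true ∧ (20 - X) * (20 - y) = (X + 20) * (20 - y') ∧
      Y = 40 - (20 - X) / 130 * (20 - y) := by
  obtain ⟨τ, t0, t1, hx, hY⟩ := H
  obtain ⟨τ', t0', t1', hx', hY'⟩ := H'
  have c0 : (kvx 0 : ℝ) = -240 := by rw [show kvx 0 = -240 from rfl]; norm_num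
  have c1 : (kvx 1 : ℝ) = 240 := by rw [show kvx 1 = 240 from rfl]; norm_num
  have c3 : (kvx 3 : ℝ) = -20 := by rw [show kvx 3 = -20 from rfl]; norm_num
  have c4 : (kvx 4 : ℝ) = 20 := by rw [show kvx 4 = 20 from rfl]; norm_num
  have d0 : (kvy 0 : ℝ) = 0 := by rw [show kvy 0 = 0 from rfl]; norm_num
  have d1 : (kvy 1 : ℝ) = 0 := by rw [show kvy 1 = 0 from rfl]; norm_num
  have d3 : (kvy 3 : ℝ) = 40 := by rw [show kvy 3 = 40 from rfl]; norm_num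
  have d4 : (kvy 4 : ℝ) = 40 := by rw [show kvy 4 = 40 from rfl]; norm_num
  rw [hb] at hx hY
  rw [hb'] at hx' hY'
  cases h <;> cases h' <;>
    simp only [Bool.false_eq_true, if_false, if_true, c0, c1, c3, c4, d0, d1, d3, d4]
      at hx hY hx' hY'
  · linarith
  · linarith
  · linarith
  · have q : τ = (20 - X) / 130 := by linarith
    have q' : τ' = (X + 20) / 130 := by linarith
    rw [q] at hY
    rw [q'] at hY'
    refine ⟨rfl, rfl, ?_, ?_⟩
    · linarith
    · linarith

lemma kX_half {b b' : KE} (hb : kX b b') {h h' : Bool}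
    {y y' X Y : ℝ} (H : kHalf b h y X Y) (H' : kHalf b' h' y' X Y) :
    h = true ∧ h' = true := by
  rcases hb with ⟨h1, h2⟩ | ⟨h1, h2⟩
  · have := kX_aux h1 h2 H H'
    exact ⟨this.1, this.2.1⟩
  · have := kX_aux h2 h1 H' H
    exact ⟨this.2.1, this.1⟩

lemma kX_unique {b b' : KE} (hb : kX b b') {h h' h1 h1' : Bool}
    {y y' X Y X1 Y1 : ℝ} (hy : y ≤ 1) (hy' : y' ≤ 1)
    (H : kHalf b h y X Y) (H' : kHalf b' h' y' X Y)
    (H1 : kHalf b h1 y X1 Y1) (H1' : kHalf b' h1' y' X1 Y1) : X = X1 ∧ Y = Y1 := by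
  rcases hb with ⟨q1, q2⟩ | ⟨q1, q2⟩
  · obtain ⟨-, -, e1, e2⟩ := kX_aux q1 q2 H H'
    obtain ⟨-, -, e3, e4⟩ := kX_aux q1 q2 H1 H1'
    have : (X - X1) * (40 - y - y') = 0 := by linarith
    have hX : X = X1 := by
      rcases mul_eq_zero.1 this with h | h <;> linarith
    exact ⟨hX, by rw [e2, e4, hX]⟩
  · obtain ⟨-, -, e1, e2⟩ := kX_aux q2 q1 H' H
    obtain ⟨-, -, e3, e4⟩ := kX_aux q2 q1 H1' H1
    have : (X - X1) * (40 - y - y') = 0 := by linarith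
    have hX : X = X1 := by
      rcases mul_eq_zero.1 this with h | h <;> linarith
    exact ⟨hX, by rw [e2, e4, hX]⟩

noncomputable def kyv {r : ℕ} : Option (Fin r) → ℝ
  | none => 0
  | some j => ((j : ℕ) + 1 : ℝ) / (r + 1)

lemma kyv_nonneg {r : ℕ} (s : Option (Fin r)) : 0 ≤ kyv s := by
  cases s
  · exact le_rfl
  · simp only [kyv]; positivity

lemma kyv_le {r : ℕ} (s : Option (Fin r)) : kyv s ≤ 1 := by
  rcases s with _ | j
  · exact zero_le_one
  · simp only [kyv]
    rw [div_le_one (by positivity)]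
    have : (j : ℕ) ≤ r := j.2.le
    have : ((j : ℕ) : ℝ) ≤ r := by exact_mod_cast this
    linarith

lemma kyv_inj {r : ℕ} : Function.Injective (kyv : Option (Fin r) → ℝ) := by
  have hr : (0 : ℝ) < r + 1 := by positivity
  rintro (_ | j) (_ | j') h
  · rfl
  · simp only [kyv] at h
    have : (0 : ℝ) < ((j' : ℕ) + 1 : ℝ) / (r + 1) := by positivity
    linarith
  · simp only [kyv] at h
    have : (0 : ℝ) < ((j : ℕ) + 1 : ℝ) / (r + 1) := by positivity
    linarith
  · simp only [kyv] at h
    rw [div_left_inj' hr.ne'] at h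
    have : ((j : ℕ) : ℝ) = (j' : ℕ) := by linarith
    rw [Fin.ext (by exact_mod_cast this : (j : ℕ) = j')]

noncomputable def kPos {m r : ℕ} : KW m r → ℝ × ℝ
  | (c, .inl a) => (kvx a + 1000 * (c : ℕ), kvy a)
  | (c, .inr (b, j)) => ((kvx b.1.1 + kvx b.1.2) / 2 + 1000 * (c : ℕ),
      (kvy b.1.1 + kvy b.1.2) / 2 + kyv (some j))

noncomputable def kSegPt {m r : ℕ} (i : KI m r) (t : ℝ) : ℝ × ℝ :=
  ((1 - t) * (kPos (kEnds i).1).1 + t * (kPos (kEnds i).2).1,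
    (1 - t) * (kPos (kEnds i).1).2 + t * (kPos (kEnds i).2).2)

def kSeg {m r : ℕ} (i : KI m r) (p : ℝ × ℝ) : Prop := ∃ t : ℝ, 0 ≤ t ∧ t ≤ 1 ∧ p = kSegPt i t

lemma kSeg_half {m r : ℕ} {c : Fin m} {b : KE} {o : Option (Fin r × Bool)} {p : ℝ × ℝ}
    (H : kSeg (c, b, o) p) : ∃ h, kHalf b h (kyv (o.map Prod.fst)) (p.1 - 1000 * (c : ℕ)) p.2 ∧
      ∀ j h', o = some (j, h') → h = h' := by
  obtain ⟨t, t0, t1, rfl⟩ := H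
  rcases o with _ | ⟨j, h⟩
  · by_cases ht : t ≤ 1 / 2
    · refine ⟨false, ⟨2 * t, by linarith, by linarith, ?_, ?_⟩, by simp⟩
      · simp only [kSegPt, kEnds, kPos, Bool.false_eq_true, if_false]; ring
      · simp only [kSegPt, kEnds, kPos, Bool.false_eq_true, if_false, Option.map, kyv]; ring
    · refine ⟨true, ⟨2 * (1 - t), by linarith, by linarith, ?_, ?_⟩, by simp⟩
      · simp only [kSegPt, kEnds, kPos, if_true]; ring
      · simp only [kSegPt, kEnds, kPos, if_true, Option.map, kyv]; ring
  · refine ⟨h, ⟨t, t0, t1, ?_, ?_⟩, by simp⟩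
    · simp only [kSegPt, kEnds, kPos]; ring
    · simp only [kSegPt, kEnds, kPos, Option.map]

lemma copy_eq {m : ℕ} {c c' : Fin m} {X : ℝ} (h : -240 ≤ X - 1000 * (c : ℕ) ∧ X - 1000 * (c : ℕ) ≤ 240)
    (h' : -240 ≤ X - 1000 * (c' : ℕ) ∧ X - 1000 * (c' : ℕ) ≤ 240) : c = c' := by
  have h1 : ((c : ℕ) : ℝ) < (c' : ℕ) + 1 := by linarith
  have h2 : ((c' : ℕ) : ℝ) < (c : ℕ) + 1 := by linarith
  have h1' : (c : ℕ) < c' + 1 := by exact_mod_cast h1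
  have h2' : (c' : ℕ) < c + 1 := by exact_mod_cast h2
  exact Fin.ext (by omega)

lemma kPos_inl_half {b : KE} {a : Fin 5} (ha : a = b.1.1 ∨ a = b.1.2) (y : ℝ) :
    ∃ h, kHalf b h y (kvx a) (kvy a) := by
  rcases ha with rfl | rfl
  · exact ⟨false, 0, le_rfl, zero_le_one, by simp, by simp⟩
  · exact ⟨true, 0, le_rfl, zero_le_one, by simp, by simp⟩

lemma kMid_half (b : KE) (h : Bool) (y : ℝ) :
    kHalf b h y ((kvx b.1.1 + kvx b.1.2) / 2) ((kvy b.1.1 + kvy b.1.2) / 2 + y) :=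
  ⟨1, zero_le_one, le_rfl, by simp, by simp⟩

lemma kPos_bound {m r : ℕ} (x : KW m r) :
    -240 ≤ (kPos x).1 - 1000 * (x.1 : ℕ) ∧ (kPos x).1 - 1000 * (x.1 : ℕ) ≤ 240 := by
  rcases x with ⟨c, a | ⟨b, j⟩⟩
  · obtain ⟨b, hb⟩ : ∃ b : KE, a = b.1.1 ∨ a = b.1.2 := by revert a; decide
    obtain ⟨h, hh⟩ := kPos_inl_half hb 0
    have := (hh.tri le_rfl zero_le_one).bound
    simpa [kPos] using this
  · have := ((kMid_half b false 0).tri le_rfl zero_le_one).bound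
    simpa [kPos] using this

lemma kMid_ne (b : KE) (a : Fin 5) (ha : a = b.1.1 ∨ a = b.1.2)
    (h : ((kvx b.1.1 : ℝ) + kvx b.1.2) / 2 = kvx a) : False := by
  apply kvx_ne b
  rcases ha with rfl | rfl <;> linarith

lemma kPos_avoid {m r : ℕ} (x : KW m r) (i : KI m r) (H : kSeg i (kPos x)) : x ∈ kEdge i := by
  obtain ⟨c, b, o⟩ := i
  obtain ⟨h, hh, ho⟩ := kSeg_half H
  have hT := hh.tri (kyv_nonneg _) (kyv_le _)
  have hc : c = x.1 := copy_eq hT.bound (kPos_bound x)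
  rcases x with ⟨c', a | ⟨b', j⟩⟩
  · dsimp only at hc
    subst hc
    simp only [kPos, add_sub_cancel_right] at hh hT
    by_cases hab : a = b.1.1 ∨ a = b.1.2
    · rcases o with _ | ⟨j, h'⟩
      · rcases hab with rfl | rfl <;> simp [kEdge, kEnds]
      · have := ho j h' rfl
        subst this
        by_cases hq : a = if h then b.1.1 else b.1.2
        · rw [hq] at hh
          exact (kHalf_end hh).elim
        · cases h <;> simp_all [kEdge, kEnds]
    · obtain ⟨b', hb1, hb2, hb3⟩ : ∃ b' : KE, b ≠ b' ∧ ¬ kX b b' ∧ (a = b'.1.1 ∨ a = b'.1.2) := by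
        clear * - hab
        revert a b; decide
      obtain ⟨h', hh'⟩ := kPos_inl_half hb3 0
      obtain ⟨a', h1, -, h2, -⟩ := kTri_sep hb1 hb2 hT (hh'.tri le_rfl zero_le_one)
      have : a = a' := kvx_inj (by exact_mod_cast h2)
      subst this
      exact absurd h1 hab
  · dsimp only at hc
    subst hc
    simp only [kPos, add_sub_cancel_right] at hh hT
    by_cases hb : b = b'
    · subst hb
      by_cases hs : o.map Prod.fst = some j
      · rcases o with _ | ⟨j', h'⟩
        · simp at hs
        · simp only [Option.map_some, Option.some.injEq] at hs
          subst hs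
          simp [kEdge, kEnds]
      · have hne : kyv (o.map Prod.fst) ≠ kyv (some j) := fun h => hs (kyv_inj h)
        rcases kHalf_strand hh (kMid_half b false (kyv (some j))) hne with h | h
        · exact (kMid_ne b _ (.inl rfl) h.1).elim
        · exact (kMid_ne b _ (.inr rfl) h.1).elim
    · by_cases hX : kX b b'
      · have := kX_half hX hh (kMid_half b' false (kyv (some j)))
        simp at this
      · obtain ⟨a, -, h1, h2, -⟩ := kTri_sep hb hX hT
          ((kMid_half b' false (kyv (some j))).tri (kyv_nonneg _) (kyv_le _))
        exact (kMid_ne b' a h1 h2).elim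

lemma kSegPt_zero {m r : ℕ} (i : KI m r) : kSegPt i 0 = kPos (kEnds i).1 := by
  simp [kSegPt]

lemma kSegPt_one {m r : ℕ} (i : KI m r) : kSegPt i 1 = kPos (kEnds i).2 := by
  simp [kSegPt]

lemma kSeg_of_mem {m r : ℕ} {x : KW m r} {i : KI m r} (h : x ∈ kEdge i) : kSeg i (kPos x) := by
  rcases Sym2.mem_iff.1 h with rfl | rfl
  · exact ⟨0, le_rfl, zero_le_one, (kSegPt_zero i).symm⟩
  · exact ⟨1, zero_le_one, le_rfl, (kSegPt_one i).symm⟩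

lemma kPos_inj {m r : ℕ} : Function.Injective (kPos : KW m r → ℝ × ℝ) := by
  intro x y hxy
  obtain ⟨i, i', h1, h2, h3⟩ : ∃ i i' : KI m r, y ∈ kEdge i ∧ y ∈ kEdge i' ∧
      ∀ z, z ∈ kEdge i → z ∈ kEdge i' → z = y := by
    rcases y with ⟨c, a | ⟨b, j⟩⟩
    · obtain ⟨b, b', h1, h2, h3⟩ : ∃ b b' : KE, (a = b.1.1 ∨ a = b.1.2) ∧
          (a = b'.1.1 ∨ a = b'.1.2) ∧ ∀ z, (z = b.1.1 ∨ z = b.1.2) →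
          (z = b'.1.1 ∨ z = b'.1.2) → z = a := by
        clear hxy
        revert a; decide
      refine ⟨(c, b, none), (c, b', none), by simpa [kEdge, kEnds] using h1,
        by simpa [kEdge, kEnds] using h2, ?_⟩
      rintro ⟨c', z | z⟩ h h'
      · simp only [kEdge, kEnds, Sym2.mem_iff, Prod.mk.injEq, Sum.inl.injEq] at h h'
        rw [h3 z (by tauto) (by tauto)]
        rcases h with h | h <;> rw [h.1]
      · simp [kEdge, kEnds] at h
    · refine ⟨(c, b, some (j, false)), (c, b, some (j, true)), by simp [kEdge, kEnds],
        by simp [kEdge, kEnds], ?_⟩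
      have hb : b.1.1 ≠ b.1.2 := ne_of_lt b.2
      intro z h h'
      simp only [kEdge, kEnds, Sym2.mem_iff] at h h'
      rcases h with rfl | rfl
      · simp [hb] at h'
      · rfl
  exact h3 x (kPos_avoid x i (hxy ▸ kSeg_of_mem h1)) (kPos_avoid x i' (hxy ▸ kSeg_of_mem h2))

lemma kSeg_inter {m r : ℕ} {c c' : Fin m} {b b' : KE} {o o' : Option (Fin r × Bool)} {p : ℝ × ℝ}
    (hne : ((c, b, o) : KI m r) ≠ (c', b', o')) (H : kSeg (c, b, o) p) (H' : kSeg (c', b', o') p)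
    (hp : ∀ x : KW m r, p ≠ kPos x) : c = c' ∧ kX b b' := by
  obtain ⟨h, hh, ho⟩ := kSeg_half H
  obtain ⟨h', hh', ho'⟩ := kSeg_half H'
  have hT := hh.tri (kyv_nonneg _) (kyv_le _)
  have hT' := hh'.tri (kyv_nonneg _) (kyv_le _)
  have hc : c = c' := copy_eq hT.bound hT'.bound
  subst hc
  refine ⟨rfl, ?_⟩
  have hP : ∀ a : Fin 5, p.1 - 1000 * (c : ℕ) = kvx a → p.2 = kvy a → False := by
    intro a h1 h2
    exact hp (c, .inl a) (Prod.ext (by simp only [kPos]; linarith) h2)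
  by_contra hX
  by_cases hb : b = b'
  · subst hb
    by_cases hs : o.map Prod.fst = o'.map Prod.fst
    · rcases o with _ | ⟨j, g⟩ <;> rcases o' with _ | ⟨j', g'⟩ <;> simp at hs
      · exact hne rfl
      · subst hs
        have e1 := ho j g rfl
        have e2 := ho' j g' rfl
        subst e1 e2
        have hgg : h ≠ h' := fun e => hne (by rw [e])
        have := kHalf_mid hh hh' hgg
        refine hp (c, .inr (b, j)) (Prod.ext ?_ this.2)
        simp only [kPos]; linarith [this.1]
    · rcases kHalf_strand hh hh' (fun e => hs (kyv_inj e)) with h | h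
      · exact hP _ h.1 h.2
      · exact hP _ h.1 h.2
  · obtain ⟨a, -, -, h1, h2⟩ := kTri_sep hb hX hT hT'
    exact hP a h1 h2

/-- The index of an edge. -/
noncomputable def kIdx {m r : ℕ} (e : (kG m r).edgeSet) : KI m r := (kEdge_surj e.1 e.2).choose

lemma kIdx_spec {m r : ℕ} (e : (kG m r).edgeSet) : kEdge (kIdx e) = e.1 :=
  (kEdge_surj e.1 e.2).choose_spec

noncomputable def kDrawing (m r : ℕ) : Drawing (kG m r) where
  pos := kPos
  pos_inj := kPos_inj
  arc := fun e t => kSegPt (kIdx e) t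
  arc_cont := by
    intro e
    unfold kSegPt
    fun_prop
  arc_inj := by
    intro e t t' h
    have hne : kPos (kEnds (kIdx e)).1 ≠ kPos (kEnds (kIdx e)).2 :=
      fun h => (kEdge_adj (kIdx e)).ne (kPos_inj h)
    simp only [kSegPt, Prod.mk.injEq] at h
    have e1 : ((t : ℝ) - t') * ((kPos (kEnds (kIdx e)).1).1 - (kPos (kEnds (kIdx e)).2).1) = 0 := by
      linarith [h.1]
    have e2 : ((t : ℝ) - t') * ((kPos (kEnds (kIdx e)).1).2 - (kPos (kEnds (kIdx e)).2).2) = 0 := by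
      linarith [h.2]
    by_contra htt
    have htt' : (t : ℝ) - t' ≠ 0 := sub_ne_zero.2 fun h => htt (Subtype.ext h)
    exact hne (Prod.ext (sub_eq_zero.1 ((mul_eq_zero.1 e1).resolve_left htt'))
      (sub_eq_zero.1 ((mul_eq_zero.1 e2).resolve_left htt')))
  arc_ends := by
    intro e v w h
    have := (kIdx_spec e).trans h
    simp only [kSegPt_zero, kSegPt_one]
    rcases Sym2.eq_iff.1 this with ⟨h1, h2⟩ | ⟨h1, h2⟩
    · left; rw [h1, h2]; exact ⟨rfl, rfl⟩
    · right; rw [h1, h2]; exact ⟨rfl, rfl⟩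
  arc_avoid := by
    intro e x t h
    rw [← kIdx_spec e]
    exact kPos_avoid x _ ⟨t, t.2.1, t.2.2, h.symm⟩

lemma kDrawing_crossing {m r : ℕ} {p : ℝ × ℝ} {e f : (kG m r).edgeSet}
    (h : (p, e, f) ∈ crossingTriples (kDrawing m r)) :
    (kIdx e).1 = (kIdx f).1 ∧ kX (kIdx e).2.1 (kIdx f).2.1 ∧ kSeg (kIdx e) p ∧
      kSeg (kIdx f) p := by
  obtain ⟨h1, ⟨t, ht⟩, ⟨t', ht'⟩, h4⟩ := h
  have s1 : kSeg (kIdx e) p := ⟨t, t.2.1, t.2.2, ht.symm⟩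
  have s2 : kSeg (kIdx f) p := ⟨t', t'.2.1, t'.2.2, ht'.symm⟩
  have := kSeg_inter (c := (kIdx e).1) (c' := (kIdx f).1) (b := (kIdx e).2.1) (b' := (kIdx f).2.1)
    (o := (kIdx e).2.2) (o' := (kIdx f).2.2) ?_ s1 s2 ?_
  · exact ⟨this.1, this.2, s1, s2⟩
  · intro hh
    have hh' : kIdx e = kIdx f := hh
    exact h1 (Subtype.ext (by rw [← kIdx_spec e, ← kIdx_spec f, hh']))
  · rintro x rfl
    refine h4 ⟨x, ?_, ?_, rfl⟩
    · rw [← kIdx_spec e]; exact kPos_avoid x _ s1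
    · rw [← kIdx_spec f]; exact kPos_avoid x _ s2

lemma upper_bound (m r : ℕ) : (crossingTriples (kDrawing m r)).Finite ∧
    (crossingTriples (kDrawing m r)).ncard ≤ 2 * (m * (r + 1) ^ 2) := by
  let F : (ℝ × ℝ) × (kG m r).edgeSet × (kG m r).edgeSet →
      Fin m × Bool × Option (Fin r) × Option (Fin r) := fun q =>
    ((kIdx q.2.1).1, decide ((kIdx q.2.1).2.1.1 = (0, 4)), (kIdx q.2.1).2.2.map Prod.fst,
      (kIdx q.2.2).2.2.map Prod.fst)
  have hinj : Set.InjOn F (crossingTriples (kDrawing m r)) := by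
    rintro ⟨p, e, f⟩ h ⟨p', e', f'⟩ h' hF
    obtain ⟨c1, x1, s1, t1⟩ := kDrawing_crossing h
    obtain ⟨c2, x2, s2, t2⟩ := kDrawing_crossing h'
    have ee : kIdx e = kIdx e' → e = e' := fun hh =>
      Subtype.ext (by rw [← kIdx_spec e, ← kIdx_spec e', hh])
    have ff : kIdx f = kIdx f' → f = f' := fun hh =>
      Subtype.ext (by rw [← kIdx_spec f, ← kIdx_spec f', hh])
    simp only [F, Prod.mk.injEq, decide_eq_decide] at hF
    obtain ⟨hc, hb, ho, ho'⟩ := hF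
    generalize kIdx e = i at c1 x1 s1 ee hc hb ho
    generalize kIdx e' = i' at c2 x2 s2 ee hc hb ho
    generalize kIdx f = k at c1 x1 t1 ff ho'
    generalize kIdx f' = k' at c2 x2 t2 ff ho'
    obtain ⟨c, b, o⟩ := i
    obtain ⟨c', b', o'⟩ := i'
    obtain ⟨d, a, u⟩ := k
    obtain ⟨d', a', u'⟩ := k'
    dsimp only at c1 c2 x1 x2 hc hb ho ho'
    subst hc c1 c2
    have hbb : b = b' ∧ a = a' := by
      rcases x1 with ⟨z1, z2⟩ | ⟨z1, z2⟩ <;> rcases x2 with ⟨w1, w2⟩ | ⟨w1, w2⟩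
      · exact ⟨Subtype.ext (z1.trans w1.symm), Subtype.ext (z2.trans w2.symm)⟩
      · exact absurd (w1.symm.trans (hb.1 z1)) (by decide)
      · exact absurd (z1.symm.trans (hb.2 w1)) (by decide)
      · exact ⟨Subtype.ext (z1.trans w1.symm), Subtype.ext (z2.trans w2.symm)⟩
    obtain ⟨rfl, rfl⟩ := hbb
    obtain ⟨g1, G1, k1⟩ := kSeg_half s1
    obtain ⟨g2, G2, k2⟩ := kSeg_half t1
    obtain ⟨g3, G3, k3⟩ := kSeg_half s2
    obtain ⟨g4, G4, k4⟩ := kSeg_half t2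
    rw [← ho] at G3
    rw [← ho'] at G4
    obtain ⟨rfl, rfl⟩ := kX_half x1 G1 G2
    obtain ⟨rfl, rfl⟩ := kX_half x1 G3 G4
    have hXY := kX_unique x1 (kyv_le _) (kyv_le _) G1 G2 G3 G4
    have hp : p = p' := Prod.ext (by linarith [hXY.1]) hXY.2
    have opt : ∀ o o' : Option (Fin r × Bool), o.map Prod.fst = o'.map Prod.fst →
        (∀ j h', o = some (j, h') → true = h') → (∀ j h', o' = some (j, h') → true = h') →
        o = o' := by
      rintro (_ | ⟨j, g⟩) (_ | ⟨j', g'⟩) q q1 q2 <;> simp_all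
    have h1 := opt o o' ho k1 k3
    have h2 := opt u u' ho' k2 k4
    rw [hp, ee (by rw [h1]), ff (by rw [h2])]
  have hmaps : Set.MapsTo F (crossingTriples (kDrawing m r)) Set.univ := fun _ _ => trivial
  refine ⟨Set.Finite.of_injOn hmaps hinj Set.finite_univ, ?_⟩
  refine (Set.ncard_le_ncard_of_injOn F hmaps hinj Set.finite_univ).trans ?_
  rw [Set.ncard_univ, Nat.card_eq_fintype_card]
  simp only [Fintype.card_prod, Fintype.card_fin, Fintype.card_bool, Fintype.card_option]
  apply le_of_eq; ring

lemma kG_crossingNumber (m r : ℕ) : crossingNumber (kG m r) = m * (r + 1) ^ 2 := by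
  unfold crossingNumber
  apply le_antisymm
  · exact Nat.sInf_le ⟨kDrawing m r, upper_bound m r⟩
  · refine le_csInf ⟨_, kDrawing m r, upper_bound m r⟩ ?_
    rintro n ⟨D, hf, hn⟩
    have := lower_bound D hf
    omega

/-- For all positive integers `Δ` and `n` with `Δ ≡ 0 (mod 4)` and
`n ≡ 0 (mod 5(Δ/2 − 1))`, there is a chordal `K_{3,3}`-minor-free graph `G` on `n`
vertices with maximum degree `Δ` and crossing number
`cr(G) = (Δn/40)·(1 + 2/(Δ−2)) > Δn/40`. -/
theorem stmt_15 (Δ n : ℕ) (hΔ : 0 < Δ) (hn : 0 < n) (hΔ4 : 4 ∣ Δ)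
    (hdvd : 5 * (Δ / 2 - 1) ∣ n) :
    ∃ (G : SimpleGraph (Fin n)) (_ : DecidableRel G.Adj),
      HasPerfectEliminationOrdering G ∧
      ¬ IsMinor (completeBipartiteGraph (Fin 3) (Fin 3)) G ∧
      G.maxDegree = Δ ∧
      (crossingNumber G : ℝ) = ((Δ : ℝ) * n / 40) * (1 + 2 / ((Δ : ℝ) - 2)) ∧
      (Δ : ℝ) * n / 40 < (crossingNumber G : ℝ) := by
  classical
  obtain ⟨k, rfl⟩ := hΔ4
  obtain ⟨r, rfl⟩ : ∃ r, k = r + 1 := ⟨k - 1, by omega⟩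
  obtain ⟨m, rfl⟩ := hdvd
  have hr : 4 * (r + 1) / 2 - 1 = 2 * r + 1 := by omega
  rw [hr] at hn ⊢
  have hm : 0 < m := Nat.pos_of_mul_pos_left hn
  have φ : Fin (5 * (2 * r + 1) * m) ≃ KW m r :=
    (Fintype.equivFinOfCardEq (by rw [kW_card]; ring)).symm
  let G : SimpleGraph (Fin (5 * (2 * r + 1) * m)) := (kG m r).comap φ
  have hG : ∀ x y, G.Adj x y ↔ (kG m r).Adj (φ x) (φ y) := fun x y => Iff.rfl
  have hcr : crossingNumber G = m * (r + 1) ^ 2 := by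
    rw [← kG_crossingNumber m r]
    exact crossingNumber_iso (SimpleGraph.Iso.comap φ (kG m r))
  have hform : ((m * (r + 1) ^ 2 : ℕ) : ℝ) = (((4 * (r + 1) : ℕ) : ℝ) *
      ((5 * (2 * r + 1) * m : ℕ) : ℝ) / 40) * (1 + 2 / (((4 * (r + 1) : ℕ) : ℝ) - 2)) := by
    push_cast
    have h2 : (2 * (r : ℝ) + 1) ≠ 0 := by positivity
    rw [show 4 * ((r : ℝ) + 1) - 2 = 2 * (2 * r + 1) by ring]
    field_simp
    ring
  refine ⟨G, fun _ _ => Classical.dec _, kG_peo φ G hG, kG_minor φ G hG, ?_, ?_, ?_⟩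
  · exact @kG_maxDegree _ _ m r hm φ G _ hG
  · rw [hcr]; exact hform
  · rw [hcr]
    push_cast
    have hm' : (0 : ℝ) < m := by exact_mod_cast hm
    have hr' : (0 : ℝ) ≤ r := by positivity
    have : 0 < (m : ℝ) * (r + 1) := by positivity
    nlinarith
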